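/- Let n ≥ 1 and f, f_param : [0,2π] → (0,∞), and set C = C_n(f, f_param). Then for every y ∈ ℝ^n and every 0 ≤ j ≤ ⌊n/2⌋, the periodogram satisfies the scaling identity I_{n,λ_j}(F_n^T C^{1/2} F_n y) = (f(λ_j)/f_param(λ_j)) · I_{n,λ_j}(y). -/

import Mathlib

open MeasureTheory Matrix Filter

/-- The `j`-th Fourier frequency `λ_j = 2πj/n`. -/
noncomputable def fourierFreq (n j : ℕ) : ℝ := 2 * Real.pi * j / n

/-- The periodogram `I_{n,λ}(z) = (2πn)⁻¹ |∑_{t=1}^n z_t e^{-itλ}|²`. -/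
noncomputable def periodogram (n : ℕ) (lam : ℝ) (z : Fin n → ℝ) : ℝ :=
  1 / (2 * Real.pi * n) *
    Complex.normSq (∑ t : Fin n, (z t : ℂ) *
      Complex.exp (-Complex.I * (((t : ℕ) + 1 : ℕ) : ℂ) * (lam : ℂ)))

/-- The real orthogonal Fourier transform matrix `F_n` with rows
`e_0, c_1, s_1, …, c_N, s_N` (and additionally `e_{n/2}` as last row for `n` even). -/
noncomputable def Fmat (n : ℕ) : Matrix (Fin n) (Fin n) ℝ :=
  Matrix.of fun r t : Fin n =>
    if r.val = 0 then 1 / Real.sqrt n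
    else if n % 2 = 0 ∧ r.val = n - 1 then (-1 : ℝ) ^ ((t : ℕ) + 1) / Real.sqrt n
    else if r.val % 2 = 1 then
      Real.sqrt 2 / Real.sqrt n *
        Real.cos (2 * Real.pi * (((r.val + 1) / 2 : ℕ) : ℝ) * (((t : ℕ) + 1 : ℕ) : ℝ) / n)
    else
      -(Real.sqrt 2 / Real.sqrt n) *
        Real.sin (2 * Real.pi * ((r.val / 2 : ℕ) : ℝ) * (((t : ℕ) + 1 : ℕ) : ℝ) / n)

/-- The diagonal matrix `D_n(f)` with entries `2πf(λ_0), 2πf(λ_1), 2πf(λ_1), …`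
matching the row ordering of `F_n`. -/
noncomputable def Dmat (n : ℕ) (f : ℝ → ℝ) : Matrix (Fin n) (Fin n) ℝ :=
  Matrix.diagonal fun r : Fin n => 2 * Real.pi * f (fourierFreq n ((r.val + 1) / 2))

/-- The diagonal correction matrix `C_n(f, f_param)` with entries
`c(λ_0), c(λ_1), c(λ_1), …` where `c = f/f_param`, matching the row ordering of `F_n`. -/
noncomputable def Cmat (n : ℕ) (f fp : ℝ → ℝ) : Matrix (Fin n) (Fin n) ℝ :=
  Matrix.diagonal fun r : Fin n =>
    f (fourierFreq n ((r.val + 1) / 2)) / fp (fourierFreq n ((r.val + 1) / 2))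

/-- Entrywise real power of the diagonal of a matrix: for a diagonal matrix `A` with
positive entries, `diagRPow n A (-(1/2))` is `A^{-1/2}` etc. -/
noncomputable def diagRPow (n : ℕ) (A : Matrix (Fin n) (Fin n) ℝ) (p : ℝ) :
    Matrix (Fin n) (Fin n) ℝ :=
  Matrix.diagonal fun i => A i i ^ p

/-!
The rows of `F_n` are multiples of sampled cosines `cos (λ_m (t + 1) + φ)`, with phase `φ = π / 2`
for the sine rows, and summing products of such samples over a full period shows `F_n F_nᵀ = 1`.
Hence `z = F_nᵀ D F_n y` has Fourier coefficients `F_n z = D F_n y`. The periodogram at `λ_j` is a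
multiple of the sum of the squared Fourier coefficients in the rows of frequency `λ_j`, and a
diagonal `D` that is constant on these rows scales all of them by the same factor.
-/

/-- The index `m` of the Fourier frequency `λ_m` of row `r` of `F_n`. Rows are counted from `0`, so
that `c_m` and `s_m` are the rows `2m - 1` and `2m`. -/
def freqIndex {n : ℕ} (r : Fin n) : ℕ := (r.val + 1) / 2

/-- The phase `φ` for which row `r` of `F_n` is a multiple of `cos (λ (t + 1) + φ)`: it is `π / 2`
on the rows `s_m` and `0` on all others. -/
noncomputable def rowPhase {n : ℕ} (r : Fin n) : ℝ :=
  if r.val ≠ 0 ∧ r.val % 2 = 0 then Real.pi / 2 else 0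

/-- The number of rows of `F_n` with frequency `λ_m`, for `n ≥ 1` and `m ≤ n / 2`: one at the
frequencies `0` and `π`, where the sine row would vanish, and two otherwise. -/
def freqMult (n m : ℕ) : ℕ := if n ∣ 2 * m then 1 else 2

lemma sum_cos_of_not_dvd {n : ℕ} {k : ℤ} (hk : ¬ (n : ℤ) ∣ k) (φ : ℝ) :
    ∑ t : Fin n, Real.cos (2 * Real.pi * k / n * (t + 1) + φ) = 0 := by
  rcases eq_or_ne n 0 with rfl | hn
  · simp
  have step_ne (m : ℤ) : 2 * Real.pi * k / n ≠ m * (2 * Real.pi) := by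
    intro h
    have hmul : (k : ℝ) = n * m := by
      field_simp at h
      linarith
    exact hk ⟨m, by exact_mod_cast hmul⟩
  have full_period : n * (2 * Real.pi * k / n) / 2 = k * Real.pi := by field_simp
  simp only [mul_add_one, add_assoc]
  rw [Fin.sum_univ_eq_sum_range
      (fun t : ℕ ↦ Real.cos (2 * Real.pi * k / n * t + (2 * Real.pi * k / n + φ))),
    Real.sum_cos n step_ne, full_period, Real.sin_int_mul_pi, zero_mul, zero_div]

lemma sum_cos_of_dvd {n : ℕ} {k : ℤ} (hk : (n : ℤ) ∣ k) (φ : ℝ) :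
    ∑ t : Fin n, Real.cos (2 * Real.pi * k / n * (t + 1) + φ) = n * Real.cos φ := by
  obtain ⟨m, rfl⟩ := hk
  have periodic (t : Fin n) :
      Real.cos (2 * Real.pi * (n * m : ℤ) / n * (t + 1) + φ) = Real.cos φ := by
    have hn : (n : ℝ) ≠ 0 := Nat.cast_ne_zero.mpr t.pos.ne'
    rw [← Real.cos_add_int_mul_two_pi φ (m * (t + 1))]
    congr 1
    push_cast
    field_simp
    ring
  rw [Finset.sum_congr rfl fun t _ ↦ periodic t, Finset.sum_const, Finset.card_fin, nsmul_eq_mul]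

lemma sum_cos_mul_cos (n k l : ℕ) (φ ψ : ℝ) :
    ∑ t : Fin n, Real.cos (fourierFreq n k * (t + 1) + φ) *
        Real.cos (fourierFreq n l * (t + 1) + ψ) =
      n / 2 * ((if (n : ℤ) ∣ k - l then Real.cos (φ - ψ) else 0) +
        if n ∣ k + l then Real.cos (φ + ψ) else 0) := by
  have product_to_sum (t : Fin n) : Real.cos (fourierFreq n k * (t + 1) + φ) *
      Real.cos (fourierFreq n l * (t + 1) + ψ) =
        (Real.cos (2 * Real.pi * (k - l : ℤ) / n * (t + 1) + (φ - ψ)) +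
          Real.cos (2 * Real.pi * (k + l : ℤ) / n * (t + 1) + (φ + ψ))) / 2 := by
    rw [eq_div_iff two_ne_zero, mul_comm, ← mul_assoc, Real.two_mul_cos_mul_cos]
    simp only [fourierFreq]
    push_cast
    congr 2 <;> ring
  have full_period_sum (m : ℤ) (θ : ℝ) :
      ∑ t : Fin n, Real.cos (2 * Real.pi * m / n * (t + 1) + θ) =
        n * if (n : ℤ) ∣ m then Real.cos θ else 0 := by
    split_ifs with h
    · exact sum_cos_of_dvd h θ
    · rw [sum_cos_of_not_dvd h, mul_zero]
  have natCast_dvd : (n : ℤ) ∣ k + l ↔ n ∣ k + l := by exact_mod_cast Int.natCast_dvd_natCast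
  simp only [product_to_sum, ← Finset.sum_div, Finset.sum_add_distrib, full_period_sum,
    natCast_dvd]
  ring

lemma freqIndex_le {n : ℕ} (r : Fin n) : freqIndex r ≤ n / 2 := by
  have := r.isLt
  unfold freqIndex
  omega

lemma dvd_two_mul_iff {n m : ℕ} (hm : m ≤ n / 2) : n ∣ 2 * m ↔ m = 0 ∨ 2 * m = n := by
  refine ⟨fun h ↦ ?_, ?_⟩
  · rcases Nat.eq_zero_or_pos m with h_zero | h_pos
    · exact .inl h_zero
    · have := Nat.le_of_dvd (by omega) h
      omega
  · rintro (rfl | h)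
    · exact dvd_zero n
    · exact h ▸ dvd_rfl

lemma rowPhase_eq_zero {n : ℕ} {r : Fin n} (h : n ∣ 2 * freqIndex r) : rowPhase r = 0 := by
  have := r.isLt
  rw [dvd_two_mul_iff (freqIndex_le r)] at h
  unfold freqIndex at h
  exact if_neg (by omega)

lemma Fmat_apply_of_dvd {n : ℕ} {r : Fin n} (h : n ∣ 2 * freqIndex r) (t : Fin n) :
    Fmat n r t = √(1 / n) * Real.cos (fourierFreq n (freqIndex r) * (t + 1)) := by
  have hr := r.isLt
  rw [dvd_two_mul_iff (freqIndex_le r)] at h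
  unfold freqIndex at h ⊢
  simp only [Fmat, Matrix.of_apply, Real.sqrt_div zero_le_one, Real.sqrt_one]
  rcases h with h_zero | h_half
  · rw [if_pos (by omega), h_zero]
    simp [fourierFreq]
  · have hn : (n : ℝ) ≠ 0 := Nat.cast_ne_zero.mpr r.pos.ne'
    have freq_eq_pi : fourierFreq n ((r.val + 1) / 2) = Real.pi := by
      have hmul : (2 * ((r.val + 1) / 2 : ℕ) : ℝ) = n := by exact_mod_cast h_half
      rw [fourierFreq, div_eq_iff hn]
      linear_combination Real.pi * hmul
    have cos_eq : Real.cos (Real.pi * (t + 1)) = (-1) ^ (t.val + 1) := by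
      rw [← Real.cos_nat_mul_pi, mul_comm, Nat.cast_add_one]
    rw [if_neg (by omega), if_pos (by omega), freq_eq_pi, cos_eq, one_div_mul_eq_div]

lemma Fmat_apply_of_not_dvd {n : ℕ} {r : Fin n} (h : ¬ n ∣ 2 * freqIndex r) (t : Fin n) :
    Fmat n r t = √(2 / n) * Real.cos (fourierFreq n (freqIndex r) * (t + 1) + rowPhase r) := by
  have hr := r.isLt
  rw [dvd_two_mul_iff (freqIndex_le r)] at h
  unfold freqIndex at h ⊢
  simp only [Fmat, Matrix.of_apply, rowPhase, fourierFreq, Real.sqrt_div zero_le_two]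
  rw [if_neg (by omega), if_neg (by omega)]
  by_cases h_odd : r.val % 2 = 1
  · rw [if_pos h_odd, if_neg (by omega), add_zero, Nat.cast_add_one, div_mul_eq_mul_div _ _ (_ + 1)]
  · have index_eq : (r.val + 1) / 2 = r.val / 2 := by omega
    rw [if_neg h_odd, if_pos (by omega), index_eq, Real.cos_add_pi_div_two, neg_mul, mul_neg,
      Nat.cast_add_one, div_mul_eq_mul_div _ _ (_ + 1)]

lemma Fmat_apply_eq_cos {n : ℕ} (r t : Fin n) :
    Fmat n r t = √(freqMult n (freqIndex r) / n) *
      Real.cos (fourierFreq n (freqIndex r) * (t + 1) + rowPhase r) := by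
  unfold freqMult
  split_ifs with h
  · rw [Fmat_apply_of_dvd h, rowPhase_eq_zero h, add_zero, Nat.cast_one]
  · rw [Fmat_apply_of_not_dvd h, Nat.cast_ofNat]

lemma cos_rowPhase_sub_eq_zero {n : ℕ} {r s : Fin n} (hrs : r ≠ s)
    (hfreq : freqIndex r = freqIndex s) : Real.cos (rowPhase r - rowPhase s) = 0 := by
  have hval : r.val ≠ s.val := Fin.val_ne_of_ne hrs
  unfold freqIndex at hfreq
  unfold rowPhase
  split_ifs
  · omega
  · rw [sub_zero, Real.cos_pi_div_two]
  · rw [zero_sub, Real.cos_neg, Real.cos_pi_div_two]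
  · omega

lemma not_dvd_two_mul_freqIndex {n : ℕ} {r s : Fin n} (hrs : r ≠ s)
    (hfreq : freqIndex r = freqIndex s) : ¬ n ∣ 2 * freqIndex r := by
  have hval : r.val ≠ s.val := Fin.val_ne_of_ne hrs
  have := r.isLt
  have := s.isLt
  rw [dvd_two_mul_iff (freqIndex_le r)]
  unfold freqIndex at *
  omega

lemma Fmat_mul_transpose_apply {n : ℕ} (r s : Fin n) :
    (Fmat n * (Fmat n)ᵀ) r s =
      √(freqMult n (freqIndex r) / n) * √(freqMult n (freqIndex s) / n) * (n / 2 *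
        ((if (n : ℤ) ∣ freqIndex r - freqIndex s then Real.cos (rowPhase r - rowPhase s) else 0) +
          if n ∣ freqIndex r + freqIndex s then Real.cos (rowPhase r + rowPhase s) else 0)) := by
  rw [Matrix.mul_apply, ← sum_cos_mul_cos, Finset.mul_sum]
  refine Finset.sum_congr rfl fun t _ ↦ ?_
  rw [Matrix.transpose_apply, Fmat_apply_eq_cos, Fmat_apply_eq_cos, mul_mul_mul_comm]

lemma Fmat_mul_transpose_apply_of_freqIndex_eq {n : ℕ} {r s : Fin n}
    (hfreq : freqIndex r = freqIndex s) : (Fmat n * (Fmat n)ᵀ) r s = freqMult n (freqIndex r) / 2 *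
      (Real.cos (rowPhase r - rowPhase s) +
        if n ∣ 2 * freqIndex r then Real.cos (rowPhase r + rowPhase s) else 0) := by
  have hn : (n : ℝ) ≠ 0 := Nat.cast_ne_zero.mpr r.pos.ne'
  rw [Fmat_mul_transpose_apply, ← hfreq, sub_self, if_pos (dvd_zero _), ← two_mul,
    Real.mul_self_sqrt (by positivity)]
  field_simp

theorem Fmat_mul_transpose (n : ℕ) : Fmat n * (Fmat n)ᵀ = 1 := by
  ext r s
  rcases eq_or_ne r s with rfl | hrs
  · rw [Fmat_mul_transpose_apply_of_freqIndex_eq rfl, Matrix.one_apply_eq, sub_self, Real.cos_zero,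
      freqMult]
    split_ifs with h
    · rw [rowPhase_eq_zero h, add_zero, Real.cos_zero]
      norm_num
    · norm_num
  rw [Matrix.one_apply_ne hrs]
  by_cases hfreq : freqIndex r = freqIndex s
  · rw [Fmat_mul_transpose_apply_of_freqIndex_eq hfreq, cos_rowPhase_sub_eq_zero hrs hfreq,
      if_neg (not_dvd_two_mul_freqIndex hrs hfreq), add_zero, mul_zero]
  · have hr := freqIndex_le r
    have hs := freqIndex_le s
    have not_dvd_sub : ¬ (n : ℤ) ∣ freqIndex r - freqIndex s := fun h ↦ by
      have := Int.eq_zero_of_abs_lt_dvd h (abs_lt.mpr ⟨by omega, by omega⟩)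
      omega
    have not_dvd_add : ¬ n ∣ freqIndex r + freqIndex s := fun h ↦ by
      have := Nat.le_of_dvd (by omega) h
      omega
    rw [Fmat_mul_transpose_apply, if_neg not_dvd_sub, if_neg not_dvd_add, add_zero, mul_zero,
      mul_zero]

lemma periodogram_eq_cos_sq_add_sin_sq (n : ℕ) (lam : ℝ) (z : Fin n → ℝ) :
    periodogram n lam z = 1 / (2 * Real.pi * n) *
      ((∑ t, z t * Real.cos (lam * (t + 1))) ^ 2 + (∑ t, z t * Real.sin (lam * (t + 1))) ^ 2) := by
  have exp_eq (t : ℕ) : Complex.exp (-Complex.I * ((t + 1 : ℕ) : ℂ) * lam) =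
      ⟨Real.cos (lam * (t + 1)), -Real.sin (lam * (t + 1))⟩ := by
    have : -Complex.I * ((t + 1 : ℕ) : ℂ) * lam = ((-(lam * (t + 1)) : ℝ) : ℂ) * Complex.I := by
      push_cast
      ring
    rw [this]
    apply Complex.ext
    · rw [Complex.exp_ofReal_mul_I_re, Real.cos_neg]
    · rw [Complex.exp_ofReal_mul_I_im, Real.sin_neg]
  simp only [periodogram, exp_eq, Complex.normSq_apply, Complex.re_sum, Complex.im_sum,
    Complex.re_ofReal_mul, Complex.im_ofReal_mul, mul_neg, Finset.sum_neg_distrib]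
  ring

lemma sum_rowPhase_of_freqIndex_eq {n j : ℕ} (hn : n ≠ 0) (hj : j ≤ n / 2) (g : ℝ → ℝ) :
    ∑ r : Fin n with freqIndex r = j, g (rowPhase r) =
      if n ∣ 2 * j then g 0 else g 0 + g (Real.pi / 2) := by
  have hiff := dvd_two_mul_iff hj
  -- For `j = 0` the truncated subtraction gives row `0`, as it should.
  let cosRow : Fin n := ⟨2 * j - 1, by omega⟩
  have cosRow_phase : rowPhase cosRow = 0 := if_neg (by simp only [cosRow]; omega)
  split_ifs with h
  · have rows : ({r : Fin n | freqIndex r = j} : Finset (Fin n)) = {cosRow} := by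
      ext r
      rw [Finset.mem_filter_univ, Finset.mem_singleton, Fin.ext_iff]
      simp only [freqIndex, cosRow]
      omega
    rw [rows, Finset.sum_singleton, cosRow_phase]
  · let sinRow : Fin n := ⟨2 * j, by omega⟩
    have sinRow_phase : rowPhase sinRow = Real.pi / 2 := if_pos (by simp only [sinRow]; omega)
    have rows : ({r : Fin n | freqIndex r = j} : Finset (Fin n)) = {cosRow, sinRow} := by
      ext r
      rw [Finset.mem_filter_univ, Finset.mem_insert, Finset.mem_singleton, Fin.ext_iff,
        Fin.ext_iff]
      simp only [freqIndex, cosRow, sinRow]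
      omega
    have distinct : cosRow ≠ sinRow := by
      simp only [ne_eq, Fin.ext_iff, cosRow, sinRow]
      omega
    rw [rows, Finset.sum_pair distinct, cosRow_phase, sinRow_phase]

lemma sin_fourierFreq_mul_eq_zero {n j : ℕ} (h : n ∣ 2 * j) (k : ℕ) :
    Real.sin (fourierFreq n j * k) = 0 := by
  obtain ⟨m, hm⟩ := h
  rcases eq_or_ne n 0 with rfl | hn
  · simp [fourierFreq]
  have hmul : (2 * j : ℝ) = n * m := by exact_mod_cast hm
  have freq_eq : fourierFreq n j = m * Real.pi := by
    rw [fourierFreq, div_eq_iff (Nat.cast_ne_zero.mpr hn)]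
    linear_combination Real.pi * hmul
  rw [freq_eq, mul_right_comm, ← Nat.cast_mul, Real.sin_nat_mul_pi]

lemma sum_sq_Fmat_mulVec {n j : ℕ} (hn : n ≠ 0) (hj : j ≤ n / 2) (z : Fin n → ℝ) :
    ∑ r : Fin n with freqIndex r = j, (Fmat n *ᵥ z) r ^ 2 = freqMult n j / n *
      ((∑ t, z t * Real.cos (fourierFreq n j * (t + 1))) ^ 2 +
        (∑ t, z t * Real.sin (fourierFreq n j * (t + 1))) ^ 2) := by
  let g (φ : ℝ) : ℝ := (∑ t, z t * Real.cos (fourierFreq n j * (t + 1) + φ)) ^ 2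
  have coeff_sq {r : Fin n} (hr : freqIndex r = j) :
      (Fmat n *ᵥ z) r ^ 2 = freqMult n j / n * g (rowPhase r) := by
    have hsqrt : √(freqMult n j / n) ^ 2 = freqMult n j / n := Real.sq_sqrt (by positivity)
    simp only [Matrix.mulVec, dotProduct, Fmat_apply_eq_cos, hr, mul_assoc, ← Finset.mul_sum,
      mul_pow, hsqrt, g, mul_comm (z _)]
  have g_zero : g 0 = (∑ t, z t * Real.cos (fourierFreq n j * (t + 1))) ^ 2 := by
    simp only [g, add_zero]
  have g_pi_div_two :
      g (Real.pi / 2) = (∑ t, z t * Real.sin (fourierFreq n j * (t + 1))) ^ 2 := by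
    simp only [g, Real.cos_add_pi_div_two, mul_neg, Finset.sum_neg_distrib, neg_sq]
  have g_pi_div_two_eq_zero (h : n ∣ 2 * j) : g (Real.pi / 2) = 0 := by
    have sin_zero (t : ℕ) : Real.sin (fourierFreq n j * (t + 1)) = 0 := by
      exact_mod_cast sin_fourierFreq_mul_eq_zero h (t + 1)
    simp only [g_pi_div_two, sin_zero, mul_zero, Finset.sum_const_zero, zero_pow two_ne_zero]
  rw [Finset.sum_congr rfl fun r hr ↦ coeff_sq (Finset.mem_filter.mp hr).2, ← Finset.mul_sum,
    sum_rowPhase_of_freqIndex_eq hn hj, ← g_zero, ← g_pi_div_two]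
  congr 1
  exact ite_eq_right_iff.mpr fun h ↦ by rw [g_pi_div_two_eq_zero h, add_zero]

theorem periodogram_fourierFreq {n j : ℕ} (hj : j ≤ n / 2) (z : Fin n → ℝ) :
    periodogram n (fourierFreq n j) z = 1 / (2 * Real.pi * freqMult n j) *
      ∑ r : Fin n with freqIndex r = j, (Fmat n *ᵥ z) r ^ 2 := by
  rcases eq_or_ne n 0 with rfl | hn
  · simp [periodogram]
  have hmult : (freqMult n j : ℝ) ≠ 0 := by
    unfold freqMult
    split_ifs <;> norm_num
  rw [periodogram_eq_cos_sq_add_sin_sq, sum_sq_Fmat_mulVec hn hj]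
  field_simp

lemma fourierFreq_mem_Icc {n j : ℕ} (hj : j ≤ n) :
    fourierFreq n j ∈ Set.Icc 0 (2 * Real.pi) := by
  have hjn : (j : ℝ) ≤ n := Nat.cast_le.mpr hj
  refine ⟨by unfold fourierFreq; positivity, ?_⟩
  rw [fourierFreq, mul_div_assoc]
  exact mul_le_of_le_one_right (by positivity) (div_le_one_of_le₀ hjn (by positivity))

lemma diagRPow_half_Cmat (n : ℕ) (f fp : ℝ → ℝ) :
    diagRPow n (Cmat n f fp) (1 / 2) = Matrix.diagonal fun r ↦
      √(f (fourierFreq n (freqIndex r)) / fp (fourierFreq n (freqIndex r))) := by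
  simp only [diagRPow, Cmat, Matrix.diagonal_apply_eq, Real.sqrt_eq_rpow, freqIndex]

theorem statement6_general {n j : ℕ} (hj : j ≤ n / 2) (d : ℕ → ℝ) (y : Fin n → ℝ) :
    periodogram n (fourierFreq n j)
        (((Fmat n)ᵀ * Matrix.diagonal (fun r ↦ d (freqIndex r)) * Fmat n) *ᵥ y) =
      d j ^ 2 * periodogram n (fourierFreq n j) y := by
  have coeff (r : Fin n) :
      (Fmat n *ᵥ (((Fmat n)ᵀ * Matrix.diagonal (fun r ↦ d (freqIndex r)) * Fmat n) *ᵥ y)) r =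
        d (freqIndex r) * (Fmat n *ᵥ y) r := by
    rw [Matrix.mulVec_mulVec, ← Matrix.mul_assoc, ← Matrix.mul_assoc, Fmat_mul_transpose,
      Matrix.one_mul, ← Matrix.mulVec_mulVec, Matrix.mulVec_diagonal]
  rw [periodogram_fourierFreq hj, periodogram_fourierFreq hj, mul_left_comm,
    Finset.mul_sum (f := fun r ↦ (Fmat n *ᵥ y) r ^ 2)]
  congr 1
  refine Finset.sum_congr rfl fun r hr ↦ ?_
  rw [coeff, (Finset.mem_filter.mp hr).2, mul_pow]

/-- scaling identity of the periodogram under the correction map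
`y ↦ F_nᵀ C_n^{1/2} F_n y`. -/
theorem statement6 (n : ℕ) (hn : 1 ≤ n) (f fp : ℝ → ℝ)
    (hf : ∀ x ∈ Set.Icc 0 (2 * Real.pi), 0 < f x)
    (hfp : ∀ x ∈ Set.Icc 0 (2 * Real.pi), 0 < fp x)
    (y : Fin n → ℝ) (j : ℕ) (hj : j ≤ n / 2) :
    periodogram n (fourierFreq n j)
        (((Fmat n)ᵀ * diagRPow n (Cmat n f fp) (1 / 2) * Fmat n).mulVec y) =
      f (fourierFreq n j) / fp (fourierFreq n j) * periodogram n (fourierFreq n j) y := by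
  have hmem : fourierFreq n j ∈ Set.Icc 0 (2 * Real.pi) := fourierFreq_mem_Icc (by omega)
  have hratio : 0 ≤ f (fourierFreq n j) / fp (fourierFreq n j) :=
    (div_pos (hf _ hmem) (hfp _ hmem)).le
  rw [diagRPow_half_Cmat,
    statement6_general hj fun m ↦ √(f (fourierFreq n m) / fp (fourierFreq n m)),
    Real.sq_sqrt hratio]
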